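/- Let F be a cellular automaton over A^ℕ. Then 𝔡_L(F(x), x) = 0 for every x ∈ A^ℕ if and only if there exists k ∈ ℕ such that F = σ^k. In other words, the cellular automata lying in the Feldman equivalence class of the identity are exactly the powers of the shift. -/

import Mathlib

open Filter

/-- The finite factor `x_[i, i+n)` of the infinite word `x`. -/
def factor {A : Type*} (x : ℕ → A) (i n : ℕ) : List A := List.ofFn (fun k : Fin n => x (i + k))

/-- The shift map `σ` on infinite words. -/
def shift {A : Type*} (x : ℕ → A) : ℕ → A := fun i => x (i + 1)
/-- The maximal length of a common (not necessarily contiguous) subsequence of `u` and `v`. -/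
noncomputable def lcs {A : Type*} (u v : List A) : ℕ :=
  sSup {n | ∃ w : List A, w.length = n ∧ w.Sublist u ∧ w.Sublist v}

/-- The (halved) Levenshtein distance `d_L(u,v) = (|u|+|v|)/2 - ℓ(u,v)`. -/
noncomputable def levD {A : Type*} (u v : List A) : ℝ :=
  ((u.length : ℝ) + v.length) / 2 - lcs u v

/-- The Feldman pseudometric `𝔡_L`. -/
noncomputable def feld {A : Type*} (x y : ℕ → A) : ℝ :=
  limsup (fun l : ℕ => levD (factor x 0 l) (factor y 0 l) / l) atTop

theorem lcs_bdd {A : Type*} (u v : List A) :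
    BddAbove {n | ∃ w : List A, w.length = n ∧ w.Sublist u ∧ w.Sublist v} := by
  refine ⟨u.length, ?_⟩
  rintro n ⟨w, rfl, hu, -⟩
  exact hu.length_le

theorem le_lcs {A : Type*} {u v w : List A} (hu : w.Sublist u) (hv : w.Sublist v) :
    w.length ≤ lcs u v :=
  le_csSup (lcs_bdd u v) ⟨w, rfl, hu, hv⟩

theorem lcs_le {A : Type*} {u v : List A} {N : ℕ}
    (h : ∀ w : List A, w.Sublist u → w.Sublist v → w.length ≤ N) : lcs u v ≤ N := by
  refine csSup_le ⟨0, [], rfl, by simp, by simp⟩ ?_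
  rintro n ⟨w, rfl, hu, hv⟩
  exact h w hu hv

theorem factor_length {A : Type*} (x : ℕ → A) (i n : ℕ) : (factor x i n).length = n := by
  simp [factor]

theorem factor_getElem? {A : Type*} (x : ℕ → A) (n t : ℕ) :
    (factor x 0 n)[t]? = if t < n then some (x t) else none := by
  by_cases h : t < n <;> simp [factor, h]

theorem factor_append {A : Type*} (x : ℕ → A) (i m n : ℕ) :
    factor x i (m + n) = factor x i m ++ factor x (i + m) n := by
  simp [factor, List.ofFn_add, add_assoc]

theorem shift_iter {A : Type*} (k : ℕ) (x : ℕ → A) (i : ℕ) : (shift^[k] x) i = x (i + k) := by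
  induction k generalizing x with
  | zero => rfl
  | succ k ih => rw [Function.iterate_succ_apply, ih]; simp [shift, add_assoc]

theorem levD_nonneg {A : Type*} (x y : ℕ → A) (l : ℕ) :
    0 ≤ levD (factor x 0 l) (factor y 0 l) := by
  have h : lcs (factor x 0 l) (factor y 0 l) ≤ l :=
    lcs_le fun w hu _ => by simpa [factor_length] using hu.length_le
  have h' : (lcs (factor x 0 l) (factor y 0 l) : ℝ) ≤ l := by exact_mod_cast h
  simp only [levD, factor_length]
  linarith

theorem levD_shift {A : Type*} (x : ℕ → A) (k l : ℕ) :
    levD (factor (shift^[k] x) 0 l) (factor x 0 l) ≤ k := by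
  simp only [levD, factor_length]
  have h : l - k ≤ lcs (factor (shift^[k] x) 0 l) (factor x 0 l) := by
    rcases le_total l k with hlk | hlk
    · simp [hlk]
    obtain ⟨m, rfl⟩ := Nat.exists_eq_add_of_le hlk
    have h1 : factor (shift^[k] x) 0 m = factor x k m := by
      simp only [factor, shift_iter]
      congr 1; funext j; congr 1; omega
    have := le_lcs (w := factor x k m) (u := factor (shift^[k] x) 0 (k + m))
      (v := factor x 0 (k + m))
      (by rw [add_comm k m, factor_append, h1]; exact List.sublist_append_left _ _)
      (by rw [factor_append, zero_add]; exact List.sublist_append_right _ _)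
    rw [factor_length] at this
    omega
  have h' : l ≤ lcs (factor (shift^[k] x) 0 l) (factor x 0 l) + k := by omega
  have h'' : (l : ℝ) ≤ lcs (factor (shift^[k] x) 0 l) (factor x 0 l) + k := by exact_mod_cast h'
  linarith

theorem feld_shift {A : Type*} (x : ℕ → A) (k : ℕ) : feld (shift^[k] x) x = 0 := by
  refine Tendsto.limsup_eq ?_
  refine tendsto_of_tendsto_of_tendsto_of_le_of_le tendsto_const_nhds
    (tendsto_const_div_atTop_nhds_zero_nat (k : ℝ)) ?_ ?_
  · intro l
    exact div_nonneg (levD_nonneg _ _ _) (Nat.cast_nonneg _)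
  · intro l
    exact div_le_div_of_nonneg_right (levD_shift x k l) (Nat.cast_nonneg _)

theorem periodic_congr {A : Type*} {x : ℕ → A} {p m n : ℕ} (hx : ∀ i, x (i + p) = x i)
    (h : m ≡ n [MOD p]) : x m = x n := by
  have hp : Function.Periodic x p := hx
  rw [← hp.map_mod_nat m, ← hp.map_mod_nat n, h]

theorem mono_gap {φ : ℕ ↪o ℕ} (t j : ℕ) : φ t + j ≤ φ (t + j) := by
  induction j with
  | zero => simp
  | succ j ih =>
    have : φ (t + j) < φ (t + (j + 1)) := φ.strictMono (by omega)
    omega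

theorem common_bound {A : Type*} {x y : ℕ → A} {p : ℕ} (hp : 0 < p)
    (hne : ∀ a b, ∃ j < p, y (a + j) ≠ x (b + j)) (l : ℕ) (w : List A)
    (hu : w.Sublist (factor y 0 l)) (hv : w.Sublist (factor x 0 l)) :
    w.length * (2 * p + 1) ≤ 2 * l * p + p * (2 * p + 1) := by
  obtain ⟨α, hα⟩ := List.sublist_iff_exists_orderEmbedding_getElem?_eq.1 hu
  obtain ⟨β, hβ⟩ := List.sublist_iff_exists_orderEmbedding_getElem?_eq.1 hv
  simp only [factor_getElem?] at hα hβ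
  rcases Nat.eq_zero_or_pos w.length with h0 | h0
  · simp [h0]
  have key : ∀ t, t < w.length → α t < l ∧ β t < l ∧ y (α t) = x (β t) := by
    intro t ht
    have h1 := hα t
    have h2 := hβ t
    rw [List.getElem?_eq_getElem ht] at h1 h2
    by_cases ha : α t < l
    · by_cases hb : β t < l
      · simp only [ha, hb, if_true, Option.some.injEq] at h1 h2
        exact ⟨ha, hb, h1.symm.trans h2⟩
      · simp [hb] at h2
    · simp [ha] at h1
  have step : ∀ q, q * p < w.length → q * (2 * p + 1) ≤ α (q * p) + β (q * p) := by
    intro q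
    induction q with
    | zero => intro _; simp
    | succ q ih =>
      intro hq
      have e : (q + 1) * p = q * p + p := by ring
      rw [e] at hq ⊢
      have ih' := ih (by omega)
      obtain ⟨j, hj, hjne⟩ := hne (α (q * p)) (β (q * p))
      have hk := (key (q * p + j) (by omega)).2.2
      have a1 := mono_gap (φ := α) (q * p) j
      have b1 := mono_gap (φ := β) (q * p) j
      have a2 := mono_gap (φ := α) (q * p + j) (p - j)
      have b2 := mono_gap (φ := β) (q * p + j) (p - j)
      have ee : q * p + j + (p - j) = q * p + p := by omega
      rw [ee] at a2 b2
      have : ¬ (α (q * p + j) = α (q * p) + j ∧ β (q * p + j) = β (q * p) + j) := by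
        rintro ⟨h1, h2⟩
        rw [h1, h2] at hk
        exact hjne hk
      have e2 : (q + 1) * (2 * p + 1) = q * (2 * p + 1) + (2 * p + 1) := by ring
      omega
  set q := (w.length - 1) / p with hq
  have h1 : q * p ≤ w.length - 1 := Nat.div_mul_le_self _ _
  have h2 : w.length - 1 < q * p + p := by
    have := Nat.lt_div_mul_add (a := w.length - 1) hp
    exact this
  have h3 := step q (by omega)
  have h4 := key (q * p) (by omega)
  have h5 : q * (2 * p + 1) ≤ 2 * l := by omega
  have h6 : w.length ≤ q * p + p := by omega
  calc w.length * (2 * p + 1) ≤ (q * p + p) * (2 * p + 1) := Nat.mul_le_mul_right _ h6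
    _ = (q * (2 * p + 1)) * p + p * (2 * p + 1) := by ring
    _ ≤ _ := by gcongr

theorem feld_periodic {A : Type*} {x y : ℕ → A} {p : ℕ} (hp : 0 < p)
    (hx : ∀ i, x (i + p) = x i) (hy : ∀ i, y (i + p) = y i) (h : feld y x = 0) :
    ∃ k < p, ∀ i, y i = x (i + k) := by
  by_contra! hno
  have hne : ∀ a b, ∃ j < p, y (a + j) ≠ x (b + j) := by
    intro a b
    obtain ⟨r, rfl⟩ : ∃ r, p = r + 1 := ⟨p - 1, by omega⟩
    obtain ⟨i, hi⟩ := hno ((b + a * r) % (r + 1)) (Nat.mod_lt _ hp)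
    refine ⟨(i + a * r) % (r + 1), Nat.mod_lt _ hp, ?_⟩
    have e1 : y (a + (i + a * r) % (r + 1)) = y i := by
      apply periodic_congr hy
      have : a + (i + a * r) % (r + 1) ≡ a + (i + a * r) [MOD (r + 1)] :=
        (Nat.mod_modEq _ _).add_left a
      refine this.trans ?_
      have e : a + (i + a * r) = i + a * (r + 1) := by ring
      rw [e]
      simp [Nat.ModEq]
    have e2 : x (b + (i + a * r) % (r + 1)) = x (i + (b + a * r) % (r + 1)) := by
      apply periodic_congr hx
      have h1 : b + (i + a * r) % (r + 1) ≡ b + (i + a * r) [MOD (r + 1)] :=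
        (Nat.mod_modEq _ _).add_left b
      have h2 : i + (b + a * r) % (r + 1) ≡ i + (b + a * r) [MOD (r + 1)] :=
        (Nat.mod_modEq _ _).add_left i
      refine h1.trans (Nat.ModEq.trans ?_ h2.symm)
      have e : b + (i + a * r) = i + (b + a * r) := by ring
      rw [e]
    rw [e1, e2]
    exact hi
  have hpR : (0 : ℝ) < p := by exact_mod_cast hp
  have hlow : ∀ l : ℕ, (l : ℝ) ≤ (levD (factor y 0 l) (factor x 0 l) + p) * (2 * p + 1) := by
    intro l
    obtain ⟨w, hw⟩ : ∃ w : List A, w.length = lcs (factor y 0 l) (factor x 0 l) ∧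
        w.Sublist (factor y 0 l) ∧ w.Sublist (factor x 0 l) :=
      Nat.sSup_mem (s := {n | ∃ w : List A, w.length = n ∧ w.Sublist (factor y 0 l) ∧
        w.Sublist (factor x 0 l)}) ⟨0, [], rfl, by simp, by simp⟩ (lcs_bdd _ _)
    have hb := common_bound hp hne l w hw.2.1 hw.2.2
    rw [hw.1] at hb
    have hb' : (lcs (factor y 0 l) (factor x 0 l) : ℝ) * (2 * p + 1)
        ≤ 2 * l * p + p * (2 * p + 1) := by exact_mod_cast hb
    simp only [levD, factor_length]
    nlinarith
  have hlim : (1 : ℝ) / (2 * (2 * p + 1)) ≤ feld y x := by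
    refine le_limsup_of_frequently_le ?_ ?_
    · refine Eventually.frequently ?_
      filter_upwards [eventually_ge_atTop (2 * p * (2 * p + 1) + 1)] with l hl
      have hl' : (2 * p * (2 * p + 1) + 1 : ℝ) ≤ l := by exact_mod_cast hl
      have hl0 : (0 : ℝ) < l := by
        have : (0 : ℝ) ≤ 2 * p * (2 * p + 1) := by positivity
        linarith
      rw [div_le_div_iff₀ (by positivity) hl0]
      have := hlow l
      nlinarith
    · refine isBoundedUnder_of ⟨1, fun l => ?_⟩
      refine div_le_one_of_le₀ ?_ (Nat.cast_nonneg _)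
      simp only [levD, factor_length]
      have : (0 : ℝ) ≤ lcs (factor y 0 l) (factor x 0 l) := Nat.cast_nonneg _
      linarith
  rw [h] at hlim
  have : (0 : ℝ) < 1 / (2 * (2 * p + 1)) := by positivity
  linarith

/-- A cellular automaton lies in the Feldman class of the identity (i.e. `𝔡_L(F(x), x) = 0`
for every `x`) if and only if it is a power of the shift. -/
theorem ca_feld_identity_iff_shift_power {A : Type*} (F : (ℕ → A) → ℕ → A)
    (hCA : ∃ (s : ℕ) (f : (Fin s → A) → A), 1 ≤ s ∧
      ∀ (x : ℕ → A) (i : ℕ), F x i = f (fun k => x (i + k))) :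
    (∀ x : ℕ → A, feld (F x) x = 0) ↔ ∃ k : ℕ, F = shift^[k] := by
  classical
  constructor
  swap
  · rintro ⟨k, rfl⟩ x
    exact feld_shift x k
  intro hF
  obtain ⟨s, f, hs, hf⟩ := hCA
  rcases subsingleton_or_nontrivial A with hA | hA
  · exact ⟨0, by funext x i; exact Subsingleton.elim _ _⟩
  obtain ⟨a, z, haz⟩ := exists_pair_ne A
  by_contra! hno
  have hu : ∀ k, ∃ u : ℕ → A, f (fun j => u j) ≠ u k := by
    intro k
    by_contra! hc
    apply hno k
    funext x i
    rw [hf, shift_iter]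
    exact hc (fun j => x (i + j))
  choose u hu using hu
  have hper : ∀ (x : ℕ → A) (p : ℕ), (∀ i, x (i + p) = x i) → ∀ i, F x (i + p) = F x i := by
    intro x p hx i
    rw [hf, hf]
    congr 1
    funext j
    rw [add_right_comm]
    exact hx _
  have hz : f (fun _ => z) = z := by
    obtain ⟨k, -, hk⟩ := feld_periodic (x := fun _ => z) (y := F fun _ => z) one_pos
      (fun _ => rfl) (hper _ 1 fun _ => rfl) (hF _)
    have := hk 0
    rwa [hf] at this
  set L := s * s + 2 with hL
  set p := 2 * L + s with hp
  let X : ℕ → A := fun r => if r = 0 ∨ r = s * s + 1 then a else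
    if r ≤ s * s then u ((r - 1) / s) ((r - 1) % s) else z
  let x : ℕ → A := fun i => X (i % p)
  have hx : ∀ i, x (i + p) = x i := fun i => by simp [x]
  have hxX : ∀ i, i < p → x i = X i := fun i hi => by simp [x, Nat.mod_eq_of_lt hi]
  have hXz : ∀ i, L ≤ i → X i = z := by
    intro i hi
    simp only [X]
    rw [if_neg (by omega), if_neg (by omega)]
  have hFz : ∀ i, L ≤ i → i + s ≤ p → F x i = z := by
    intro i h1 h2
    rw [hf, ← hz]
    congr 1
    funext j
    have := j.2
    rw [hxX _ (by omega), hXz _ (by omega)]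
  have hXu : ∀ k j, k < s → j < s → X (1 + k * s + j) = u k j := by
    intro k j hk hj
    have h1 : k * s + s ≤ s * s := by nlinarith
    simp only [X]
    rw [if_neg (by omega), if_pos (by omega)]
    have e : 1 + k * s + j - 1 = j + s * k := by rw [mul_comm]; omega
    rw [e, Nat.add_mul_div_left _ _ (by omega), Nat.add_mul_mod_self_left, Nat.div_eq_of_lt hj,
      Nat.mod_eq_of_lt hj, zero_add]
  obtain ⟨k, hkp, hk⟩ := feld_periodic (x := x) (y := F x) (p := p) (by omega) hx (hper x p hx)
    (hF x)
  rcases lt_or_ge k s with hks | hks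
  · have h1 : k * s + s ≤ s * s := by nlinarith
    have h2 := hk (1 + k * s)
    rw [hf, hxX _ (by omega), hXu k k hks hks] at h2
    apply hu k
    rw [← h2]
    congr 1
    funext j
    have := j.2
    rw [hxX _ (by omega), hXu k j hks j.2]
  · rcases le_or_gt L (p - k) with h1 | h1
    · have h2 := hk (p - k)
      rw [hFz _ h1 (by omega)] at h2
      have e : p - k + k = 0 + p := by omega
      rw [e, hx, hxX _ (by omega)] at h2
      apply haz
      rw [h2]
      simp [X]
    · have h2 := hk (p - k + (L - 1))
      rw [hFz _ (by omega) (by omega)] at h2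
      have e : p - k + (L - 1) + k = (s * s + 1) + p := by omega
      rw [e, hx, hxX _ (by omega)] at h2
      apply haz
      rw [h2]
      simp [X]
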